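/- For a nonnegative finite measure μ on ℝⁿ (n ≥ 2) and t > 0, the Lebesgue measure of the set {x ∈ ℝⁿ : ∫ |x - y|^{-(n-1)} dμ(y) ≥ t} is at most C(n) · t^{-n/(n-1)} · μ(ℝⁿ)^{n/(n-1)} for a constant C(n) depending only on n. -/

import Mathlib

open MeasureTheory

/-!
Split the kernel `|z| ^ (α - d)` at a radius `r`. The far part is at most `r ^ (α - d)`, so it
contributes at most `r ^ (α - d) * μ univ` to the potential; choose `r` to make this `t / 2`. The
potential can then reach `t` only where the contribution of the near part is at least `t / 2`. In
polar coordinates the near part has integral `(d / α) * ν (ball 0 1) * r ^ α`, so Tonelli's theorem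
bounds the integral of its convolution with `μ`, and Markov's inequality concludes.
-/

open Metric Module Set
open scoped ENNReal NNReal

section RadialIntegrals

variable {E : Type*} [NormedAddCommGroup E] [NormedSpace ℝ E] [FiniteDimensional ℝ E]
  [Nontrivial E] [MeasurableSpace E] [BorelSpace E] (ν : Measure E) [ν.IsAddHaarMeasure]

lemma lintegral_fun_norm_addHaar {f : ℝ → ℝ≥0∞} (hf : Measurable f) :
    ∫⁻ x, f ‖x‖ ∂ν = finrank ℝ E * ν (ball 0 1) *
      ∫⁻ s in Ioi (0 : ℝ), ENNReal.ofReal (s ^ (finrank ℝ E - 1)) * f s :=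
  calc
    ∫⁻ x, f ‖x‖ ∂ν = ∫⁻ x : ({0}ᶜ : Set E), f ‖x.1‖ ∂(ν.comap (↑)) := by
      rw [lintegral_subtype_comap (measurableSet_singleton _).compl fun x ↦ f ‖x‖,
        restrict_compl_singleton]
    _ = ∫⁻ z, f z.2 ∂ν.toSphere.prod (.volumeIoiPow (finrank ℝ E - 1)) := by
      simpa using ν.measurePreserving_homeomorphUnitSphereProd.lintegral_comp_emb
        (Homeomorph.measurableEmbedding _) (f ∘ Subtype.val ∘ Prod.snd)
    _ = ν.toSphere univ * ∫⁻ s : Ioi (0 : ℝ), f s ∂.volumeIoiPow (finrank ℝ E - 1) := by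
      simpa using lintegral_prod_mul (μ := ν.toSphere) (f := 1)
        (g := fun s : Ioi (0 : ℝ) ↦ f s) (by fun_prop) (by fun_prop)
    _ = _ := by
      rw [ν.toSphere_apply_univ, Measure.volumeIoiPow,
        lintegral_withDensity_eq_lintegral_mul _ (by fun_prop) (by fun_prop)]
      congr 1
      exact lintegral_subtype_comap measurableSet_Ioi
        fun s ↦ ENNReal.ofReal (s ^ (finrank ℝ E - 1)) * f s

lemma setLIntegral_Ioo_rpow_sub_one {α r : ℝ} (hα : 0 < α) (hr : 0 ≤ r) :
    ∫⁻ s in Ioo 0 r, ENNReal.ofReal (s ^ (α - 1)) = ENNReal.ofReal (r ^ α / α) := by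
  rw [restrict_Ioo_eq_restrict_Ioc, ← ofReal_integral_eq_lintegral_ofReal,
    ← intervalIntegral.integral_of_le hr, integral_rpow (.inl (by linarith))]
  · simp [hα.ne']
  · exact (intervalIntegral.intervalIntegrable_rpow' (by linarith)).1
  · filter_upwards [ae_restrict_mem measurableSet_Ioc] with s hs
    exact Real.rpow_nonneg hs.1.le _

lemma setLIntegral_ball_enorm_rpow {α : ℝ} (hα : 0 < α) (r : ℝ≥0) :
    ∫⁻ z in ball (0 : E) r, ‖z‖ₑ ^ (α - finrank ℝ E) ∂ν =
      ENNReal.ofReal (finrank ℝ E / α) * ν (ball 0 1) * r ^ α := by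
  have polar_integrand : ∀ s ∈ Ioo 0 (r : ℝ),
      ENNReal.ofReal (s ^ (finrank ℝ E - 1)) * ENNReal.ofReal s ^ (α - finrank ℝ E) =
        ENNReal.ofReal (s ^ (α - 1)) := fun s hs ↦ by
    rw [ENNReal.ofReal_rpow_of_pos hs.1, ← ENNReal.ofReal_mul (pow_nonneg hs.1.le _),
      ← Real.rpow_natCast, ← Real.rpow_add hs.1, Nat.cast_pred finrank_pos]
    ring_nf
  calc
    ∫⁻ z in ball (0 : E) r, ‖z‖ₑ ^ (α - finrank ℝ E) ∂ν
      = ∫⁻ z, (Iio (r : ℝ)).indicator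
          (fun s ↦ ENNReal.ofReal s ^ (α - finrank ℝ E)) ‖z‖ ∂ν := by
        rw [← lintegral_indicator measurableSet_ball]
        simp [indicator, ofReal_norm]
    _ = finrank ℝ E * ν (ball 0 1) * ENNReal.ofReal (r ^ α / α) := by
        rw [lintegral_fun_norm_addHaar ν (.indicator (by fun_prop) measurableSet_Iio)]
        simp only [← indicator_mul_right (Iio (r : ℝ))
          fun s ↦ ENNReal.ofReal (s ^ (finrank ℝ E - 1))]
        rw [setLIntegral_indicator measurableSet_Iio, Iio_inter_Ioi,
          setLIntegral_congr_fun measurableSet_Ioo polar_integrand,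
          setLIntegral_Ioo_rpow_sub_one hα r.coe_nonneg]
    _ = ENNReal.ofReal (finrank ℝ E / α) * ν (ball 0 1) * r ^ α := by
        rw [ENNReal.ofReal_div_of_pos hα, ENNReal.ofReal_div_of_pos hα, ENNReal.ofReal_natCast,
          ← NNReal.coe_rpow,
          ENNReal.ofReal_coe_nnreal, ENNReal.coe_rpow_of_nonneg r hα.le]
        simp only [div_eq_mul_inv]
        ring

end RadialIntegrals

section Convolution

variable {G : Type*} [AddGroup G] [MeasurableSpace G] [MeasurableAdd G] [MeasurableSub₂ G]
  (ν μ : Measure G) [SFinite ν] [ν.IsAddRightInvariant]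

lemma lintegral_lintegral_comp_sub [SFinite μ] {k : G → ℝ≥0∞} (hk : Measurable k) :
    ∫⁻ x, ∫⁻ y, k (x - y) ∂μ ∂ν = (∫⁻ z, k z ∂ν) * μ univ := by
  rw [lintegral_lintegral_swap (by fun_prop)]
  simp_rw [lintegral_sub_right_eq_self k, lintegral_const]

lemma meas_ge_lintegral_comp_sub_le [SFinite μ] {k k₀ : G → ℝ≥0∞} {c t : ℝ≥0∞}
    (hk₀ : Measurable k₀) (hk : ∀ z, k z ≤ k₀ z + c) (hc : c * μ univ ≤ t / 2)
    (ht₀ : t ≠ 0) (ht : t ≠ ∞) :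
    ν {x | t ≤ ∫⁻ y, k (x - y) ∂μ} ≤ (∫⁻ z, k₀ z ∂ν) * (2 * μ univ / t) := by
  have potential_le (x : G) : ∫⁻ y, k (x - y) ∂μ ≤ (∫⁻ y, k₀ (x - y) ∂μ) + t / 2 :=
    calc
      ∫⁻ y, k (x - y) ∂μ ≤ ∫⁻ y, (k₀ (x - y) + c) ∂μ := lintegral_mono fun y ↦ hk (x - y)
      _ = (∫⁻ y, k₀ (x - y) ∂μ) + c * μ univ := by
        rw [lintegral_add_right _ measurable_const, lintegral_const]
      _ ≤ (∫⁻ y, k₀ (x - y) ∂μ) + t / 2 := by gcongr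
  calc
    ν {x | t ≤ ∫⁻ y, k (x - y) ∂μ} ≤ ν {x | t / 2 ≤ ∫⁻ y, k₀ (x - y) ∂μ} := by
      refine measure_mono fun x (hx : t ≤ _) ↦ ?_
      rw [← ENNReal.add_halves t] at hx
      exact (ENNReal.add_le_add_iff_right (by finiteness)).1
        (hx.trans (by simpa using potential_le x))
    _ ≤ (∫⁻ x, ∫⁻ y, k₀ (x - y) ∂μ ∂ν) / (t / 2) :=
      meas_ge_le_lintegral_div (by fun_prop) (by simpa) (by finiteness)
    _ = (∫⁻ z, k₀ z ∂ν) * (2 * μ univ / t) := by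
      rw [lintegral_lintegral_comp_sub ν μ hk₀, div_eq_mul_inv, ENNReal.inv_div (by simp) (by simp)]
      simp only [div_eq_mul_inv]
      ring

end Convolution

lemma ofReal_norm_rpow_le_enorm_rpow {E : Type*} [NormedAddCommGroup E] (z : E) (p : ℝ) :
    ENNReal.ofReal (‖z‖ ^ p) ≤ ‖z‖ₑ ^ p := by
  -- At `z = 0` and `p < 0` the real power is the junk value `0`, the extended one is `∞`.
  obtain rfl | hz := eq_or_ne z 0
  · obtain rfl | hp := eq_or_ne p 0 <;> simp [*]
  · rw [← ofReal_norm, ENNReal.ofReal_rpow_of_pos (norm_pos_iff.2 hz)]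

lemma enorm_rpow_le_indicator_ball_add {E : Type*} [SeminormedAddCommGroup E] {p : ℝ}
    (hp : p ≤ 0) (r : ℝ≥0) (z : E) :
    ‖z‖ₑ ^ p ≤ (ball (0 : E) r).indicator (‖·‖ₑ ^ p) z + r ^ p := by
  by_cases hz : z ∈ ball (0 : E) r
  · simp [hz]
  · have hrz : (r : ℝ≥0∞) ≤ ‖z‖ₑ := by simpa [enorm_eq_nnnorm, ← NNReal.coe_le_coe] using hz
    rw [indicator_of_notMem hz, zero_add, ← neg_neg p, ENNReal.rpow_neg, ENNReal.rpow_neg _ (-p)]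
    gcongr
    exact neg_nonneg.2 hp

section RieszPotential

variable {E : Type*} [NormedAddCommGroup E] [NormedSpace ℝ E] [MeasurableSpace E]

/-- The Riesz potential of order `α` of a measure `μ`, the convolution of `μ` with
`|z| ^ (α - d)` where `d` is the dimension, without the usual normalizing constant. It is computed
in `ℝ≥0∞`, so that for `α < d` the kernel is `∞` at the origin and atoms of `μ` are seen. -/
noncomputable def rieszPotential (α : ℝ) (μ : Measure E) (x : E) : ℝ≥0∞ :=
  ∫⁻ y, ‖x - y‖ₑ ^ (α - finrank ℝ E) ∂μ

variable [FiniteDimensional ℝ E] [BorelSpace E]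

lemma meas_ge_rieszPotential_le_of_rpow_mul_le (ν : Measure E) [ν.IsAddHaarMeasure] {α : ℝ}
    (hα : 0 < α) (hαd : α ≤ finrank ℝ E) (μ : Measure E) [SFinite μ] {t : ℝ≥0∞} (ht₀ : t ≠ 0)
    (ht : t ≠ ∞) {r : ℝ≥0} (hr : (r : ℝ≥0∞) ^ (α - finrank ℝ E) * μ univ ≤ t / 2) :
    ν {x | t ≤ rieszPotential α μ x} ≤
      ENNReal.ofReal (finrank ℝ E / α) * ν (ball 0 1) * r ^ α * (2 * μ univ / t) := by
  have : Nontrivial E := nontrivial_of_finrank_pos (R := ℝ) (by exact_mod_cast hα.trans_le hαd)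
  rw [← setLIntegral_ball_enorm_rpow ν hα, ← lintegral_indicator measurableSet_ball]
  exact meas_ge_lintegral_comp_sub_le ν μ (.indicator (by fun_prop) measurableSet_ball)
    (enorm_rpow_le_indicator_ball_add (sub_nonpos.2 hαd) r) hr ht₀ ht

theorem riesz_potential_weak_type_general (ν : Measure E) [ν.IsAddHaarMeasure] {α : ℝ}
    (hα : 0 < α) (hαd : α < finrank ℝ E) (μ : Measure E) [IsFiniteMeasure μ]
    {t : ℝ≥0∞} (ht₀ : t ≠ 0) (ht : t ≠ ∞) :
    ν {x | t ≤ rieszPotential α μ x} ≤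
      ENNReal.ofReal (finrank ℝ E / α) * ν (ball 0 1) *
        (2 * μ univ / t) ^ (finrank ℝ E / (finrank ℝ E - α)) := by
  have hgap : 0 < finrank ℝ E - α := sub_pos.2 hαd
  set q : ℝ≥0∞ := 2 * μ univ / t
  -- For `μ = 0` this gives `r = 0`, and the far part below is `∞ * 0 = 0`.
  obtain ⟨r, hr⟩ : ∃ r : ℝ≥0, (r : ℝ≥0∞) = q ^ (finrank ℝ E - α)⁻¹ :=
    ⟨_, ENNReal.coe_toNNReal (ENNReal.rpow_ne_top_of_nonneg (by positivity) (by finiteness))⟩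
  have far_le : (r : ℝ≥0∞) ^ (α - finrank ℝ E) * μ univ ≤ t / 2 := by
    rw [ENNReal.le_div_iff_mul_le (by simp) (by simp)]
    calc
      (r : ℝ≥0∞) ^ (α - finrank ℝ E) * μ univ * 2 = t * ((2 * μ univ)⁻¹ * (2 * μ univ)) := by
        rw [← neg_sub (finrank ℝ E : ℝ), ENNReal.rpow_neg, hr, ENNReal.rpow_inv_rpow hgap.ne',
          ENNReal.inv_div (.inl ht) (.inl ht₀), div_eq_mul_inv]
        ring
      _ ≤ t := mul_le_of_le_one_right' (ENNReal.inv_mul_le_one _)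
  have rpow_mul_self : (r : ℝ≥0∞) ^ α * q = q ^ (finrank ℝ E / (finrank ℝ E - α)) := by
    have exponent : finrank ℝ E / (finrank ℝ E - α) = (finrank ℝ E - α)⁻¹ * α + 1 := by
      field_simp
      ring
    rw [exponent, ENNReal.rpow_add_of_nonneg _ _ (by positivity) zero_le_one, ENNReal.rpow_one,
      ENNReal.rpow_mul, hr]
  rw [← rpow_mul_self, ← mul_assoc]
  exact meas_ge_rieszPotential_le_of_rpow_mul_le ν hα hαd.le μ ht₀ ht far_le

end RieszPotential

lemma ofReal_mul_two_mul_div_rpow {c t p : ℝ} {m : ℝ≥0∞} (hc : 0 ≤ c) (ht : 0 < t) (hp : 0 ≤ p)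
    (hm : m ≠ ∞) :
    ENNReal.ofReal c * (2 * m / ENNReal.ofReal t) ^ p =
      ENNReal.ofReal (c * 2 ^ p * t ^ (-p) * m.toReal ^ p) := by
  lift m to ℝ≥0 using hm
  calc
    ENNReal.ofReal c * (2 * m / ENNReal.ofReal t) ^ p
      = ENNReal.ofReal (c * (2 * m / t) ^ p) := by
        rw [ENNReal.ofReal_mul hc, ← ENNReal.ofReal_rpow_of_nonneg (by positivity) hp,
          ENNReal.ofReal_div_of_pos ht, ENNReal.ofReal_mul zero_le_two, ENNReal.ofReal_ofNat,
          ENNReal.ofReal_coe_nnreal]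
    _ = ENNReal.ofReal (c * 2 ^ p * t ^ (-p) * (m : ℝ≥0∞).toReal ^ p) := by
        rw [Real.div_rpow (by positivity) ht.le, Real.mul_rpow zero_le_two m.coe_nonneg,
          Real.rpow_neg ht.le, ENNReal.coe_toReal]
        congr 1
        ring

theorem riesz_potential_weak_type (n : ℕ) (hn : 2 ≤ n) :
    ∃ C : ℝ, 0 < C ∧
      ∀ μ : Measure (EuclideanSpace ℝ (Fin n)), IsFiniteMeasure μ →
        ∀ t : ℝ, 0 < t →
          volume {x : EuclideanSpace ℝ (Fin n) |
              ENNReal.ofReal t ≤ ∫⁻ y, ENNReal.ofReal (‖x - y‖ ^ (-((n : ℝ) - 1))) ∂μ}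
            ≤ ENNReal.ofReal
                (C * t ^ (-((n : ℝ) / (n - 1))) *
                  (μ Set.univ).toReal ^ ((n : ℝ) / (n - 1))) := by
  have hn₁ : (1 : ℝ) < n := by exact_mod_cast hn
  have ball_pos : 0 < volume.real (ball (0 : EuclideanSpace ℝ (Fin n)) 1) :=
    ENNReal.toReal_pos (measure_ball_pos _ _ one_pos).ne' measure_ball_lt_top.ne
  refine ⟨n * volume.real (ball (0 : EuclideanSpace ℝ (Fin n)) 1) * 2 ^ ((n : ℝ) / (n - 1)),
    by positivity, fun μ hμ t ht ↦ ?_⟩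
  rw [← ofReal_mul_two_mul_div_rpow (by positivity) ht (by positivity) (measure_ne_top μ univ)]
  calc
    _ ≤ volume {x | ENNReal.ofReal t ≤ rieszPotential 1 μ x} := by
      refine measure_mono fun x hx ↦ hx.trans (lintegral_mono fun y ↦ ?_)
      simpa using ofReal_norm_rpow_le_enorm_rpow (x - y) (-((n : ℝ) - 1))
    _ ≤ _ := by
      simpa [ENNReal.ofReal_mul, measure_ball_lt_top.ne] using
        riesz_potential_weak_type_general volume one_pos (by simpa) μ
          (ENNReal.ofReal_pos.2 ht).ne' ENNReal.ofReal_ne_top
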